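/- For a Young diagram λ contained in the m×n rectangle with |λ| = p boxes, the ratio (dim S^λ(ℂ^m) · dim S^{λ'}(ℂ^n)) / C(mn, p) equals (f^λ · f^{n^m/λ}) / f^{n^m}, where f^μ denotes the number of standard Young tableaux of shape μ, S^λ denotes the Schur functor, and n^m/λ is the (rotated) complement of λ in the m-row, n-column rectangle. -/

import Mathlib

open YoungDiagram Finset

/-- The rectangular Young diagram with `m` rows and `n` columns. -/
def rect (m n : ℕ) : YoungDiagram where
  cells := Finset.range m ×ˢ Finset.range n
  isLowerSet := by
    rintro ⟨a1, a2⟩ ⟨b1, b2⟩ ⟨h1, h2⟩ hb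
    simp only [Finset.coe_product, Set.mem_prod, Finset.mem_coe, Finset.mem_range] at *
    exact ⟨lt_of_le_of_lt h1 hb.1, lt_of_le_of_lt h2 hb.2⟩

/-- The 180°-rotated complement of a Young diagram `μ` inside the rectangle with
`m` rows and `n` columns: its row lengths are `n - μ.rowLen (m-1-i)`. -/
def complement (m n : ℕ) (μ : YoungDiagram) : YoungDiagram where
  cells := (Finset.range m ×ˢ Finset.range n).filter fun p => p.2 < n - μ.rowLen (m - 1 - p.1)
  isLowerSet := by
    rintro ⟨a1, a2⟩ ⟨b1, b2⟩ ⟨h1, h2⟩ hb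
    simp only [Finset.coe_filter, Set.mem_setOf_eq, Finset.mem_product, Finset.mem_range] at *
    refine ⟨⟨lt_of_le_of_lt h1 hb.1.1, lt_of_le_of_lt h2 hb.1.2⟩, ?_⟩
    calc b2 ≤ a2 := h2
      _ < n - μ.rowLen (m - 1 - a1) := hb.2
      _ ≤ n - μ.rowLen (m - 1 - b1) :=
          Nat.sub_le_sub_left (μ.rowLen_anti _ _ (Nat.sub_le_sub_left h1 _)) n

/-- The hook length of the cell `c` in the Young diagram `μ` (arm + leg + 1). -/
def hookLength (μ : YoungDiagram) (c : ℕ × ℕ) : ℕ :=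
  (μ.rowLen c.1 - c.2) + (μ.colLen c.2 - c.1) - 1

/-- The product of all hook lengths of `μ`. -/
def hookProd (μ : YoungDiagram) : ℕ := ∏ c ∈ μ.cells, hookLength μ c

/-- The number of semistandard Young tableaux of shape `μ` with entries in `{0, …, k-1}`;
this equals `s_μ(1^k) = dim S^μ(ℂ^k)`. -/
noncomputable def ssytCount (μ : YoungDiagram) (k : ℕ) : ℕ :=
  Set.ncard {T : SemistandardYoungTableau μ | ∀ i j, (i, j) ∈ μ → T i j < k}

/-- `T : ℕ × ℕ → ℕ` is a standard Young tableau of shape `μ` (with entries `0, …, |μ|-1`):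
it is a bijection from the cells of `μ` to `{0, …, |μ|-1}`, strictly increasing along
rows and columns, and zero outside `μ`. -/
def IsSyt (μ : YoungDiagram) (T : ℕ × ℕ → ℕ) : Prop :=
  Set.BijOn T (μ.cells : Set (ℕ × ℕ)) (Finset.range μ.card : Set ℕ) ∧
  (∀ i j, (i, j + 1) ∈ μ → T (i, j) < T (i, j + 1)) ∧
  (∀ i j, (i + 1, j) ∈ μ → T (i, j) < T (i + 1, j)) ∧
  (∀ c, c ∉ μ → T c = 0)

/-- The number of standard Young tableaux of shape `μ`, i.e. `f^μ`. -/
noncomputable def sytCount (μ : YoungDiagram) : ℕ := Set.ncard {T | IsSyt μ T}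

/-!
Semistandard and standard tableaux obey the same kind of recursion: deleting the largest entry
removes a horizontal strip, respectively a box. In terms of the beta-numbers `β` of `μ` the first
means passing to an interlacing sequence, the second lowering a single `β a` by one. The Vandermonde
determinant `D` of the beta-numbers satisfies the corresponding recurrences, whence
`ssytCount μ m = D / ∏_{i < m} i!` and `sytCount μ = |μ|! D / ∏ β!`.

The complement reflects the beta-numbers, which preserves `D` and hence `ssytCount`. Moreover, the
beta-numbers of the complement and of the transpose of `μ` partition `{0, …, m + n - 1}`, so the
product of their factorials does not depend on `μ`. Therefore `ssytCount μ m * ssytCount μᵀ n` is a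
constant multiple of `C(mn, |μ|) * sytCount μ * sytCount (complement m n μ)`, and `μ = ⊥` gives the
constant.
-/

section Tableaux

variable {α : Type*} {key : ℕ × ℕ → α} {μ ν : YoungDiagram} {k : ℕ} {T : ℕ × ℕ → ℕ}

/-- Fillings of `μ` with entries in `{0, …, k - 1}`, weakly increasing along rows and columns, in
which cells with the same key carry distinct entries. For `key = Prod.snd` these are the
semistandard tableaux, for a constant key the standard ones (when `k = μ.card`), which lets both be
counted by one recursion. As in `IsSyt`, the filling is extended by zero outside `μ`. -/
structure IsTableau (key : ℕ × ℕ → α) (μ : YoungDiagram) (k : ℕ) (T : ℕ × ℕ → ℕ) : Prop where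
  monotoneOn : MonotoneOn T μ
  injOn : Set.InjOn (fun c ↦ (T c, key c)) μ
  lt : ∀ c ∈ μ, T c < k
  eq_zero : ∀ c ∉ μ, T c = 0

lemma finite_setOf_isTableau (key : ℕ × ℕ → α) (μ : YoungDiagram) (k : ℕ) :
    {T | IsTableau key μ k T}.Finite := by
  refine Set.Finite.of_injOn (f := fun T (c : {c // c ∈ μ.cells}) ↦ T c.1)
    (t := Set.pi Set.univ fun _ ↦ Set.Iio k) (fun T hT c _ ↦ hT.lt c.1 c.2) ?_
    (Set.Finite.pi fun _ ↦ Set.finite_Iio k)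
  intro T hT U hU hTU
  ext c
  by_cases hc : c ∈ μ
  · exact congrFun hTU ⟨c, hc⟩
  · rw [hT.eq_zero c hc, hU.eq_zero c hc]

/-- The number of fillings of `μ` satisfying `IsTableau key μ k`. -/
noncomputable def tableauCount (key : ℕ × ℕ → α) (μ : YoungDiagram) (k : ℕ) : ℕ :=
  {T | IsTableau key μ k T}.ncard

lemma tableauCount_bot (key : ℕ × ℕ → α) (k : ℕ) : tableauCount key ⊥ k = 1 := by
  rw [tableauCount, Set.ncard_eq_one]
  refine ⟨0, Set.eq_singleton_iff_unique_mem.2 ⟨⟨?_, ?_, ?_, fun _ _ ↦ rfl⟩, fun T hT ↦ ?_⟩⟩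
  · exact fun c hc ↦ absurd hc (notMem_bot c)
  · exact fun c hc ↦ absurd hc (notMem_bot c)
  · exact fun c hc ↦ absurd hc (notMem_bot c)
  · exact funext fun c ↦ hT.eq_zero c (notMem_bot c)

lemma tableauCount_eq_zero {s : Finset (ℕ × ℕ)} (hs : ∀ c ∈ s, c ∈ μ)
    (hkey : ∀ c ∈ s, ∀ d ∈ s, key c = key d) (hk : k < #s) : tableauCount key μ k = 0 := by
  rw [tableauCount, Set.ncard_eq_zero (finite_setOf_isTableau key μ k),
    Set.eq_empty_iff_forall_notMem]
  intro T hT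
  obtain ⟨c, hc, d, hd, hcd, hTcd⟩ := exists_ne_map_eq_of_card_lt_of_maps_to
    (t := range k) (by rwa [card_range]) fun c hc ↦ mem_range.2 (hT.lt c (hs c hc))
  exact hcd (hT.injOn (hs c hc) (hs d hd) (Prod.ext hTcd (hkey c hc d hd)))

lemma finite_Iic_youngDiagram (μ : YoungDiagram) : (Set.Iic μ).Finite :=
  (μ.cells.powerset.finite_toSet.preimage fun _ _ _ _ h ↦ YoungDiagram.ext h).subset
    fun _ hν ↦ mem_coe.2 (mem_powerset.2 (cells_subset_iff.2 hν))

/-- The diagrams `ν ≤ μ` such that the cells of `μ / ν` have distinct keys. These are the possible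
shapes of the sub-tableau obtained by deleting the cells with the largest permitted entry. -/
noncomputable def strips (key : ℕ × ℕ → α) (μ : YoungDiagram) : Finset YoungDiagram :=
  ((finite_Iic_youngDiagram μ).sep fun ν ↦ Set.InjOn key ((μ : Set (ℕ × ℕ)) \ ν)).toFinset

lemma mem_strips : ν ∈ strips key μ ↔ ν ≤ μ ∧ Set.InjOn key ((μ : Set (ℕ × ℕ)) \ ν) := by
  simp only [strips, Set.Finite.mem_toFinset, Set.mem_ofPred_eq, Set.mem_Iic]

/-- The filling of `μ` that agrees with `T` on `ν` and is constant `k` on `μ / ν`. -/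
def fillStrip (μ ν : YoungDiagram) (k : ℕ) (T : ℕ × ℕ → ℕ) (c : ℕ × ℕ) : ℕ :=
  if c ∈ ν then T c else if c ∈ μ then k else 0

namespace IsTableau

lemma isTableau_fillStrip (hT : IsTableau key ν k T) (hν : ν ∈ strips key μ) :
    IsTableau key μ (k + 1) (fillStrip μ ν k T) := by
  obtain ⟨hle, hkey⟩ := mem_strips.1 hν
  refine ⟨fun c (hc : c ∈ μ) d (hd : d ∈ μ) hcd ↦ ?_,
    fun c (hc : c ∈ μ) d (hd : d ∈ μ) hcd ↦ ?_, fun c hc ↦ ?_, fun c hc ↦ ?_⟩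
  · have hdc : d ∈ ν → c ∈ ν := fun h ↦ ν.isLowerSet hcd h
    have hmono : c ∈ ν → d ∈ ν → T c ≤ T d := fun hc hd ↦ hT.monotoneOn hc hd hcd
    have := hT.lt c
    grind [fillStrip]
  · have hinj : c ∈ ν → d ∈ ν → T c = T d → key c = key d → c = d :=
      fun hc hd h h' ↦ hT.injOn hc hd (Prod.ext h h')
    have hkey' : c ∉ ν → d ∉ ν → key c = key d → c = d := fun hcν hdν h ↦
      hkey ⟨hc, hcν⟩ ⟨hd, hdν⟩ h
    have := hT.lt c
    have := hT.lt d
    grind [fillStrip]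
  · have := hT.lt c
    grind [fillStrip]
  · have : c ∉ ν := fun h ↦ hc (hle h)
    grind [fillStrip]

lemma fillStrip_lt_iff (hT : IsTableau key ν k T) {c : ℕ × ℕ} (hc : c ∈ μ) :
    fillStrip μ ν k T c < k ↔ c ∈ ν := by
  have := hT.lt c
  grind [fillStrip]

lemma exists_eq_fillStrip (hT : IsTableau key μ (k + 1) T) :
    ∃ ν ∈ strips key μ, ∃ U, IsTableau key ν k U ∧ fillStrip μ ν k U = T := by
  let ν : YoungDiagram := ⟨{c ∈ μ.cells | T c < k}, by
    intro d c hcd hd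
    simp only [coe_filter, mem_cells, Set.mem_ofPred_eq] at hd ⊢
    have hc := μ.isLowerSet hcd hd.1
    exact ⟨hc, (hT.monotoneOn hc hd.1 hcd).trans_lt hd.2⟩⟩
  have hν : ∀ c, c ∈ ν ↔ c ∈ μ ∧ T c < k := fun c ↦ by
    rw [← mem_cells, ← mem_cells]; exact mem_filter
  have htop : ∀ c ∈ μ, c ∉ ν → T c = k := fun c hc hcν ↦ by
    have := hT.lt c hc
    grind
  refine ⟨ν, mem_strips.2 ⟨fun c hc ↦ ((hν c).1 hc).1, fun c hc d hd hcd ↦ ?_⟩,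
    fun c ↦ if c ∈ ν then T c else 0, ⟨fun c (hc : c ∈ ν) d (hd : d ∈ ν) hcd ↦ ?_,
    fun c (hc : c ∈ ν) d (hd : d ∈ ν) hcd ↦ ?_, fun c hc ↦ ?_, fun c hc ↦ if_neg hc⟩,
    funext fun c ↦ ?_⟩
  · exact hT.injOn hc.1 hd.1 (Prod.ext ((htop c hc.1 hc.2).trans (htop d hd.1 hd.2).symm) hcd)
  · rw [if_pos hc, if_pos hd]
    exact hT.monotoneOn ((hν c).1 hc).1 ((hν d).1 hd).1 hcd
  · simp only [if_pos hc, if_pos hd] at hcd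
    exact hT.injOn ((hν c).1 hc).1 ((hν d).1 hd).1 hcd
  · rw [if_pos hc]
    exact ((hν c).1 hc).2
  · have := htop c
    have := hT.eq_zero c
    grind [fillStrip]

end IsTableau

/-- Delete the cells carrying the largest entry `k`. -/
theorem tableauCount_succ (key : ℕ × ℕ → α) (μ : YoungDiagram) (k : ℕ) :
    tableauCount key μ (k + 1) = ∑ ν ∈ strips key μ, tableauCount key ν k := by
  simp only [tableauCount, Set.ncard_eq_toFinset_card _ (finite_setOf_isTableau _ _ _)]
  rw [← card_sigma]
  symm
  refine card_nbij (fun x ↦ fillStrip μ x.1 k x.2) ?_ ?_ ?_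
  · rintro ⟨ν, T⟩ h
    simp only [coe_sigma, Set.mem_sigma_iff, mem_coe, Set.Finite.mem_toFinset] at h ⊢
    exact IsTableau.isTableau_fillStrip h.2 h.1
  · rintro ⟨ν, T⟩ h ⟨ν', T'⟩ h' hTT'
    simp only [coe_sigma, Set.mem_sigma_iff, mem_coe, Set.Finite.mem_toFinset] at h h'
    obtain ⟨hν, hT : IsTableau key ν k T⟩ := h
    obtain ⟨hν', hT' : IsTableau key ν' k T'⟩ := h'
    have hle := (mem_strips.1 hν).1
    have hle' := (mem_strips.1 hν').1
    simp only at hTT'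
    obtain rfl : ν = ν' := by
      ext c
      by_cases hc : c ∈ μ
      · rw [mem_cells, mem_cells, ← hT.fillStrip_lt_iff hc, hTT', hT'.fillStrip_lt_iff hc]
      · exact ⟨fun h ↦ absurd (hle h) hc, fun h ↦ absurd (hle' h) hc⟩
    obtain rfl : T = T' := by
      funext c
      by_cases hc : c ∈ ν
      · simpa only [fillStrip, if_pos hc] using congrFun hTT' c
      · rw [hT.eq_zero c hc, hT'.eq_zero c hc]
    rfl
  · intro T hT
    obtain ⟨ν, hν, U, hU, rfl⟩ := IsTableau.exists_eq_fillStrip ((Set.Finite.mem_toFinset _).1 hT)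
    exact ⟨⟨ν, U⟩, by simpa using ⟨hν, hU⟩, rfl⟩

lemma monotoneOn_of_row_col (hrow : ∀ i j, (i, j + 1) ∈ μ → T (i, j) ≤ T (i, j + 1))
    (hcol : ∀ i j, (i + 1, j) ∈ μ → T (i, j) ≤ T (i + 1, j)) : MonotoneOn T μ := by
  have hrow' (i) {j j'} (hj : j ≤ j') (hd : (i, j') ∈ μ) : T (i, j) ≤ T (i, j') := by
    induction j', hj using Nat.le_induction with
    | base => rfl
    | succ j' _ ih => exact (ih (μ.up_left_mem le_rfl j'.le_succ hd)).trans (hrow _ _ hd)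
  have hcol' {i i'} (j) (hi : i ≤ i') (hd : (i', j) ∈ μ) : T (i, j) ≤ T (i', j) := by
    induction i', hi using Nat.le_induction with
    | base => rfl
    | succ i' _ ih => exact (ih (μ.up_left_mem i'.le_succ le_rfl hd)).trans (hcol _ _ hd)
  rintro ⟨i, j⟩ - ⟨i', j'⟩ hd ⟨hi : i ≤ i', hj : j ≤ j'⟩
  exact (hrow' i hj (μ.up_left_mem hi le_rfl hd)).trans (hcol' j' hi hd)

lemma ssytCount_eq_tableauCount (μ : YoungDiagram) (k : ℕ) :
    ssytCount μ k = tableauCount Prod.snd μ k := by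
  have hinj : Function.Injective fun S : SemistandardYoungTableau μ ↦ Function.uncurry S :=
    fun S S' h ↦ DFunLike.coe_injective (Function.uncurry_injective h)
  rw [ssytCount, tableauCount, ← Set.ncard_image_of_injective _ hinj]
  congr 1
  ext T
  constructor
  · rintro ⟨S, hS, rfl⟩
    refine ⟨monotoneOn_of_row_col (fun i j ↦ S.row_weak j.lt_succ_self)
      fun i j h ↦ (S.col_strict i.lt_succ_self h).le, ?_, fun c ↦ hS c.1 c.2,
      fun c ↦ S.zeros⟩
    rintro ⟨i, j⟩ hc ⟨i', j'⟩ hd h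
    obtain ⟨hS : S i j = S i' j', rfl : j = j'⟩ := Prod.mk.inj h
    rcases lt_trichotomy i i' with hi | rfl | hi
    · exact absurd hS (S.col_strict hi hd).ne
    · rfl
    · exact absurd hS (S.col_strict hi hc).ne'
  · intro hT
    refine ⟨⟨fun i j ↦ T (i, j), fun {i j j'} hj hd ↦ ?_, fun {i i' j} hi hd ↦ ?_,
      fun {i j} ↦ hT.eq_zero (i, j)⟩, fun i j ↦ hT.lt (i, j), rfl⟩
    · exact hT.monotoneOn (μ.up_left_mem le_rfl hj.le hd) hd ⟨le_rfl, hj.le⟩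
    · have hc := μ.up_left_mem hi.le le_rfl hd
      refine (hT.monotoneOn hc hd ⟨hi.le, le_rfl⟩).lt_of_ne fun h ↦ hi.ne ?_
      exact congrArg Prod.fst (hT.injOn hc hd (Prod.ext h rfl))

lemma isSyt_iff_isTableau : IsSyt μ T ↔ IsTableau (fun _ ↦ ()) μ μ.card T := by
  constructor
  · rintro ⟨hbij, hrow, hcol, hzero⟩
    exact ⟨monotoneOn_of_row_col (fun i j h ↦ (hrow i j h).le) fun i j h ↦ (hcol i j h).le,
      fun c hc d hd h ↦ hbij.injOn hc hd (Prod.mk.inj h).1,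
      fun c hc ↦ mem_range.1 (mem_coe.1 (hbij.mapsTo hc)), hzero⟩
  · intro hT
    have hinj : Set.InjOn T μ.cells := fun c hc d hd h ↦ hT.injOn hc hd (Prod.ext h rfl)
    have hmaps : Set.MapsTo T μ.cells (range μ.card) := fun c hc ↦
      mem_coe.2 (mem_range.2 (hT.lt c hc))
    have hstrict {c d : ℕ × ℕ} (hd : d ∈ μ) (hcd : c < d) : T c < T d :=
      have hc := μ.isLowerSet hcd.le hd
      (hT.monotoneOn hc hd hcd.le).lt_of_ne fun h ↦ hcd.ne (hinj hc hd h)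
    exact ⟨⟨hmaps, hinj, surjOn_of_injOn_of_card_le T hmaps hinj (card_range _).le⟩,
      fun i j h ↦ hstrict h (Prod.mk_lt_mk_iff_right.2 j.lt_succ_self),
      fun i j h ↦ hstrict h (Prod.mk_lt_mk_iff_left.2 i.lt_succ_self), hT.eq_zero⟩

lemma sytCount_eq_tableauCount (μ : YoungDiagram) :
    sytCount μ = tableauCount (fun _ ↦ ()) μ μ.card := by
  simp only [sytCount, tableauCount, isSyt_iff_isTableau]

end Tableaux

section Recurrences

variable {μ ν : YoungDiagram} {k : ℕ}

lemma ssytCount_bot (k : ℕ) : ssytCount ⊥ k = 1 := by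
  rw [ssytCount_eq_tableauCount, tableauCount_bot]

lemma sytCount_bot : sytCount ⊥ = 1 := by
  rw [sytCount_eq_tableauCount, tableauCount_bot]

lemma ssytCount_eq_zero (hμ : μ.rowLen k ≠ 0) : ssytCount μ k = 0 := by
  have hk : k < #(μ.col 0) := by
    rwa [← colLen_eq_card, ← mem_iff_lt_colLen, mem_iff_lt_rowLen, Nat.pos_iff_ne_zero]
  rw [ssytCount_eq_tableauCount]
  refine tableauCount_eq_zero (fun c hc ↦ (mem_col_iff.1 hc).1) (fun c hc d hd ↦ ?_) hk
  rw [(mem_col_iff.1 hc).2, (mem_col_iff.1 hd).2]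

theorem ssytCount_succ (μ : YoungDiagram) (k : ℕ) :
    ssytCount μ (k + 1) = ∑ ν ∈ strips Prod.snd μ with ν.rowLen k = 0, ssytCount ν k := by
  rw [ssytCount_eq_tableauCount, tableauCount_succ]
  simp only [← ssytCount_eq_tableauCount]
  exact (sum_filter_of_ne fun ν _ hν ↦ not_not.1 (mt ssytCount_eq_zero hν)).symm

lemma card_sdiff_add_card (h : ν ≤ μ) : #(μ.cells \ ν.cells) + ν.card = μ.card :=
  card_sdiff_add_card_eq_card (cells_subset_iff.2 h)

lemma mem_strips_const : ν ∈ strips (fun _ ↦ ()) μ ↔ ν ≤ μ ∧ μ.card ≤ ν.card + 1 := by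
  rw [mem_strips]
  refine and_congr_right fun h ↦ ?_
  rw [← card_sdiff_add_card h, add_comm, Nat.add_le_add_iff_left, card_le_one]
  simp [Set.InjOn, -Prod.forall]

/-- The diagrams obtained from `μ` by removing one box. -/
noncomputable def lowerCovers (μ : YoungDiagram) : Finset YoungDiagram :=
  {ν ∈ (finite_Iic_youngDiagram μ).toFinset | ν.card + 1 = μ.card}

lemma mem_lowerCovers : ν ∈ lowerCovers μ ↔ ν ≤ μ ∧ ν.card + 1 = μ.card := by
  simp only [lowerCovers, mem_filter, Set.Finite.mem_toFinset, Set.mem_Iic]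

theorem sytCount_eq_sum_lowerCovers (hμ : μ.card ≠ 0) :
    sytCount μ = ∑ ν ∈ lowerCovers μ, sytCount ν := by
  obtain ⟨p, hp⟩ := Nat.exists_eq_succ_of_ne_zero hμ
  have hsub : lowerCovers μ ⊆ strips (fun _ ↦ ()) μ := fun ν hν ↦
    mem_strips_const.2 ((mem_lowerCovers.1 hν).imp_right Eq.ge)
  rw [sytCount_eq_tableauCount, hp, tableauCount_succ, ← sum_subset hsub]
  · refine sum_congr rfl fun ν hν ↦ ?_
    rw [sytCount_eq_tableauCount, Nat.succ_injective ((mem_lowerCovers.1 hν).2.trans hp)]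
  · intro ν hν hν'
    rw [mem_strips_const] at hν
    rw [mem_lowerCovers] at hν'
    exact tableauCount_eq_zero (s := ν.cells) (fun c ↦ (mem_cells c).1) (fun _ _ _ _ ↦ rfl)
      (by change p < ν.card; grind)

lemma card_transpose (μ : YoungDiagram) : μ.transpose.card = μ.card :=
  card_bij' (fun c _ ↦ c.swap) (fun c _ ↦ c.swap) (by simp) (by simp) (by simp) (by simp)

lemma IsTableau.transpose {α : Type*} {key : ℕ × ℕ → α} {T : ℕ × ℕ → ℕ}
    (hT : IsTableau key μ k T) :
    IsTableau (key ∘ Prod.swap) μ.transpose k (T ∘ Prod.swap) where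
  monotoneOn _ hc _ hd hcd :=
    hT.monotoneOn (mem_transpose.1 hc) (mem_transpose.1 hd) (Prod.swap_le_swap.2 hcd)
  injOn _ hc _ hd h :=
    Prod.swap_injective (hT.injOn (mem_transpose.1 hc) (mem_transpose.1 hd) h)
  lt _ hc := hT.lt _ (mem_transpose.1 hc)
  eq_zero _ hc := hT.eq_zero _ (mt mem_transpose.2 hc)

theorem sytCount_transpose (μ : YoungDiagram) : sytCount μ.transpose = sytCount μ := by
  rw [sytCount_eq_tableauCount, sytCount_eq_tableauCount, card_transpose]
  refine Set.ncard_congr (fun T _ ↦ T ∘ Prod.swap) (fun T hT ↦ ?_) (fun T T' _ _ h ↦ ?_)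
    fun T hT ↦ ⟨T ∘ Prod.swap, hT.transpose, rfl⟩
  · simpa using IsTableau.transpose hT
  · exact Prod.swap_surjective.injective_comp_right h

end Recurrences

section BetaNumbers

variable {μ ν : YoungDiagram} {m k : ℕ}

lemma le_iff_forall_rowLen_le : ν ≤ μ ↔ ∀ i, ν.rowLen i ≤ μ.rowLen i := by
  refine ⟨fun h i ↦ le_of_forall_lt fun j hj ↦ ?_, fun h c hc ↦ ?_⟩
  · exact mem_iff_lt_rowLen.1 (h (mem_iff_lt_rowLen.2 hj))
  · exact mem_iff_lt_rowLen.2 ((mem_iff_lt_rowLen.1 hc).trans_le (h c.1))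

lemma rowLen_eq_zero_of_le {i : ℕ} (hμ : μ.rowLen m = 0) (hi : m ≤ i) : μ.rowLen i = 0 :=
  Nat.eq_zero_of_le_zero (hμ ▸ μ.rowLen_anti m i hi)

lemma rowLen_bot (i : ℕ) : (⊥ : YoungDiagram).rowLen i = 0 := by
  by_contra h
  exact notMem_bot _ (mem_iff_lt_rowLen.2 (Nat.pos_of_ne_zero h))

lemma card_eq_sum_rowLen (hμ : μ.rowLen m = 0) : μ.card = ∑ i ∈ range m, μ.rowLen i := by
  have hmaps : Set.MapsTo Prod.fst (μ.cells : Set (ℕ × ℕ)) (range m) := fun c hc ↦ by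
    have := mem_iff_lt_rowLen.1 ((mem_cells c).1 hc)
    by_contra h
    grind [rowLen_eq_zero_of_le]
  rw [YoungDiagram.card, card_eq_sum_card_fiberwise hmaps]
  exact sum_congr rfl fun i _ ↦ μ.rowLen_eq_card.symm

/-- The first-column hook lengths (beta-numbers) of a diagram with at most `m` rows, listed in
increasing order: `betaNumber μ m a` is `λᵢ + m - i` in the usual notation with `i = m - a`. -/
def betaNumber (μ : YoungDiagram) (m : ℕ) (a : Fin m) : ℕ := μ.rowLen a.rev + a

lemma strictMono_betaNumber (μ : YoungDiagram) (m : ℕ) : StrictMono (betaNumber μ m) :=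
  fun _ _ hab ↦ add_lt_add_of_le_of_lt (μ.rowLen_anti _ _ (Fin.rev_le_rev.2 hab.le)) hab

lemma betaNumber_bot (m : ℕ) (a : Fin m) : betaNumber ⊥ m a = a := by
  rw [betaNumber, rowLen_bot, zero_add]

lemma betaNumber_le_betaNumber_iff (hν : ν.rowLen m = 0) :
    betaNumber ν m ≤ betaNumber μ m ↔ ν ≤ μ := by
  rw [le_iff_forall_rowLen_le]
  refine ⟨fun h i ↦ ?_, fun h a ↦ Nat.add_le_add_right (h _) _⟩
  rcases lt_or_ge i m with hi | hi
  · simpa [betaNumber] using h (Fin.rev ⟨i, hi⟩)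
  · exact (rowLen_eq_zero_of_le hν hi).trans_le (Nat.zero_le _)

lemma injOn_betaNumber (m : ℕ) : Set.InjOn (betaNumber · m) {ν | ν.rowLen m = 0} :=
  fun _ hμ _ hν h ↦ le_antisymm ((betaNumber_le_betaNumber_iff hμ).1 h.le)
    ((betaNumber_le_betaNumber_iff hν).1 h.ge)

lemma exists_rowLen_eq {r : Fin m → ℕ} (hr : Antitone r) :
    ∃ μ : YoungDiagram, μ.rowLen m = 0 ∧ ∀ i : Fin m, μ.rowLen i = r i := by
  refine ⟨ofRowLens (List.ofFn r) hr.sortedGE_ofFn, ?_, fun i ↦ ?_⟩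
  · by_contra h
    simpa using (mem_ofRowLens.1 (mem_iff_lt_rowLen.2 (Nat.pos_of_ne_zero h))).1
  · simpa using rowLen_ofRowLens (hw := hr.sortedGE_ofFn) (Fin.cast List.length_ofFn.symm i)

lemma exists_betaNumber_eq {β : Fin m → ℕ} (hβ : StrictMono β) :
    ∃ μ : YoungDiagram, μ.rowLen m = 0 ∧ betaNumber μ m = β := by
  cases m with
  | zero => exact ⟨⊥, rowLen_bot 0, Subsingleton.elim _ _⟩
  | succ m =>
    have hstep (a : Fin m) : β a.castSucc < β a.succ := hβ a.castSucc_lt_succ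
    have hmono : Monotone fun a ↦ β a - a := Fin.monotone_iff_le_succ.2 fun a ↦ by
      have := hstep a
      simp only [Fin.val_castSucc, Fin.val_succ]
      omega
    have hle (a : Fin (m + 1)) : a ≤ β a := by
      induction a using Fin.induction with
      | zero => exact Nat.zero_le _
      | succ a ih => exact (Nat.succ_le_succ ih).trans (hstep a)
    obtain ⟨μ, hμ, hr⟩ := exists_rowLen_eq (hmono.comp_antitone Fin.rev_anti)
    refine ⟨μ, hμ, funext fun a ↦ ?_⟩
    rw [betaNumber, hr, Function.comp_apply, Fin.rev_rev, Nat.sub_add_cancel (hle a)]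

lemma sum_betaNumber (hμ : μ.rowLen m = 0) :
    ∑ a, betaNumber μ m a = μ.card + ∑ a : Fin m, (a : ℕ) := by
  simp only [betaNumber, sum_add_distrib]
  rw [card_eq_sum_rowLen hμ, ← Fin.sum_univ_eq_sum_range]
  exact congrArg (· + _) (Equiv.sum_comp Fin.revPerm fun a : Fin m ↦ μ.rowLen a)

lemma mem_strips_snd :
    ν ∈ strips Prod.snd μ ↔ ν ≤ μ ∧ ∀ i, μ.rowLen (i + 1) ≤ ν.rowLen i := by
  rw [mem_strips]
  refine and_congr_right fun _ ↦ ⟨fun h i ↦ ?_, fun h c hc d hd hcd ↦ ?_⟩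
  · by_contra! hlt
    have hμ : (i + 1, ν.rowLen i) ∈ μ := mem_iff_lt_rowLen.2 hlt
    have hν : (i, ν.rowLen i) ∉ ν := fun h ↦ (mem_iff_lt_rowLen.1 h).false
    have := h ⟨μ.up_left_mem i.le_succ le_rfl hμ, hν⟩
      ⟨hμ, fun h ↦ hν (ν.up_left_mem i.le_succ le_rfl h)⟩ rfl
    simp at this
  · wlog hlt : c.1 < d.1 generalizing c d
    · rcases (not_lt.1 hlt).eq_or_lt with h | h
      · exact Prod.ext h.symm hcd
      · exact (this d hd c hc hcd.symm h).symm
    have : c.2 < μ.rowLen d.1 := hcd ▸ mem_iff_lt_rowLen.1 hd.1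
    exact absurd (mem_iff_lt_rowLen.2 ((this.trans_le (μ.rowLen_anti _ _ hlt)).trans_le (h c.1)))
      hc.2

lemma mem_strips_snd_iff_betaNumber (hμ : μ.rowLen (k + 1) = 0) (hν : ν.rowLen k = 0) :
    ν ∈ strips Prod.snd μ ↔ ∀ a : Fin k, betaNumber ν k a ∈
      Ico (betaNumber μ (k + 1) a.castSucc) (betaNumber μ (k + 1) a.succ) := by
  have hbeta (a : Fin k) : betaNumber ν k a ∈
        Ico (betaNumber μ (k + 1) a.castSucc) (betaNumber μ (k + 1) a.succ) ↔
      ν.rowLen a.rev ≤ μ.rowLen a.rev ∧ μ.rowLen (a.rev + 1) ≤ ν.rowLen a.rev := by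
    simp only [betaNumber, mem_Ico, Fin.rev_castSucc, Fin.rev_succ, Fin.val_castSucc, Fin.val_succ]
    omega
  rw [mem_strips_snd, le_iff_forall_rowLen_le, ← forall_and]
  simp only [hbeta]
  refine ⟨fun h a ↦ h a.rev, fun h i ↦ ?_⟩
  rcases lt_or_ge i k with hi | hi
  · simpa using h (Fin.rev ⟨i, hi⟩)
  · simp only [rowLen_eq_zero_of_le hν hi, rowLen_eq_zero_of_le hμ (Nat.succ_le_succ hi),
      Nat.zero_le, le_refl, and_self]

lemma le_and_sum_add_one_eq_iff {ι : Type*} [Fintype ι] [DecidableEq ι] {f g : ι → ℕ} :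
    f ≤ g ∧ ∑ i, f i + 1 = ∑ i, g i ↔ ∃ i, g = f + Pi.single i 1 := by
  refine ⟨fun ⟨hle, hsum⟩ ↦ ?_, ?_⟩
  · have hsub : g = f + (g - f) := (add_tsub_cancel_of_le hle).symm
    have hone : ∑ i, (g - f) i = 1 := by
      rw [hsub] at hsum
      simp only [Pi.add_apply, sum_add_distrib] at hsum
      omega
    obtain ⟨i, hi⟩ := (Finsupp.sum_eq_one_iff (Finsupp.equivFunOnFinite.symm (g - f))).1 <|
      (Finsupp.sum_fintype _ _ fun _ ↦ rfl).trans hone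
    refine ⟨i, hsub.trans (congrArg (f + ·) ?_)⟩
    rw [← Finsupp.single_eq_pi_single, ← hi, Finsupp.coe_equivFunOnFinite_symm]
  · rintro ⟨i, rfl⟩
    exact ⟨le_self_add, by simp [sum_add_distrib]⟩

lemma mem_lowerCovers_iff_betaNumber (hμ : μ.rowLen m = 0) (hν : ν.rowLen m = 0) :
    ν ∈ lowerCovers μ ↔ ∃ a, betaNumber μ m = betaNumber ν m + Pi.single a 1 := by
  rw [mem_lowerCovers, ← le_and_sum_add_one_eq_iff, betaNumber_le_betaNumber_iff hν,
    sum_betaNumber hμ, sum_betaNumber hν, add_right_comm, Nat.add_right_cancel_iff]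

end BetaNumbers

section Determinants

variable {R : Type*} [CommRing R] {m k : ℕ}

open Matrix Polynomial

lemma sum_det_updateRow_mul {ι : Type*} [Fintype ι] [DecidableEq ι] (M N : Matrix ι ι R) :
    ∑ a, (M.updateRow a ((M * N) a)).det = M.det * N.trace := by
  have hdet (a : ι) : (M.updateRow a ((M * N) a)).det = (M * N * M.adjugate) a a := by
    rw [← cramer_transpose_apply, cramer_eq_adjugate_mulVec, ← adjugate_transpose,
      mulVec_transpose]
    rfl
  calc ∑ a, (M.updateRow a ((M * N) a)).det
    _ = (M * N * M.adjugate).trace := sum_congr rfl fun a _ ↦ hdet a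
    _ = (M.det • N).trace := by
      rw [Matrix.mul_assoc, trace_mul_comm, Matrix.mul_assoc, adjugate_mul, Matrix.mul_smul,
        Matrix.mul_one]
    _ = M.det * N.trace := by rw [trace_smul, smul_eq_mul]

lemma sum_piFinset_det {ι α : Type*} [Fintype ι] [DecidableEq ι] (s : ι → Finset α)
    (f : ι → α → ι → R) :
    ∑ γ ∈ Fintype.piFinset s, (of fun i ↦ f i (γ i)).det = (of fun i ↦ ∑ x ∈ s i, f i x).det :=
  ((detRowAlternating (R := R)).toMultilinearMap.map_sum_finset f s).symm

lemma det_eq_det_sub_castSucc {M : Matrix (Fin (k + 1)) (Fin (k + 1)) R} (hM : ∀ i, M i 0 = 1) :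
    M.det = (of fun i j : Fin k ↦ M i.succ j.succ - M i.castSucc j.succ).det := by
  let B : Matrix (Fin (k + 1)) (Fin (k + 1)) R :=
    of (Fin.cons (M 0) fun i : Fin k ↦ M i.succ - M i.castSucc)
  have hB : M.det = B.det :=
    det_eq_of_forall_row_eq_smul_add_pred (fun _ ↦ 1) (by simp [B]) (by simp [B])
  rw [hB, det_succ_column_zero, Fin.sum_univ_succ]
  simp [B, hM, submatrix]

lemma det_vandermonde_eq_det_descPochhammer (v : Fin m → R) :
    (vandermonde v).det = (of fun i j : Fin m ↦ (descPochhammer R j).eval (v i)).det := by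
  nontriviality R
  have hmonic (j : ℕ) : (descPochhammer R j).Monic ∧ (descPochhammer R j).natDegree = j := by
    rw [← descPochhammer_map (Int.castRingHom R)]
    exact ⟨(monic_descPochhammer ℤ j).map _,
      ((monic_descPochhammer ℤ j).natDegree_map _).trans (descPochhammer_natDegree ℤ j)⟩
  exact det_eval_matrixOfPolynomials_eq_det_vandermonde v _ (fun j ↦ (hmonic j).2)
    fun j ↦ (hmonic j).1

lemma mul_eval_descPochhammer_sub_one (j : ℕ) (x : R) :
    x * (descPochhammer R j).eval (x - 1) = (x - j) * (descPochhammer R j).eval x := by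
  rw [mul_comm (x - j), ← descPochhammer_succ_eval, descPochhammer_succ_left]
  simp

lemma sum_Ico_eval_descPochhammer (j : ℕ) {p q : ℕ} (hpq : p ≤ q) :
    (j + 1) * ∑ x ∈ Ico p q, (descPochhammer R j).eval (x : R) =
      (descPochhammer R (j + 1)).eval (q : R) - (descPochhammer R (j + 1)).eval (p : R) := by
  rw [mul_sum, ← sum_Ico_sub (fun x : ℕ ↦ (descPochhammer R (j + 1)).eval (x : R)) hpq]
  refine sum_congr rfl fun x _ ↦ ?_
  have h := mul_eval_descPochhammer_sub_one j (x + 1 : R)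
  rw [add_sub_cancel_right] at h
  rw [descPochhammer_succ_eval, descPochhammer_succ_eval, Nat.cast_succ]
  linear_combination h

/-- In the basis of falling factorials the row sums telescope. -/
theorem factorial_mul_sum_det_vandermonde {β : Fin (k + 1) → ℕ} (hβ : Monotone β) :
    k.factorial * ∑ γ ∈ Fintype.piFinset fun a : Fin k ↦ Ico (β a.castSucc) (β a.succ),
        (vandermonde fun a ↦ (γ a : R)).det =
      (vandermonde fun a ↦ (β a : R)).det := by
  simp only [det_vandermonde_eq_det_descPochhammer]
  have hfact : (k.factorial : R) = ∏ j : Fin k, ((j : R) + 1) := by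
    rw [← prod_range_add_one_eq_factorial, Finset.prod_range]
    push_cast
    rfl
  rw [sum_piFinset_det _ fun _ (x : ℕ) (j : Fin k) ↦ (descPochhammer R j).eval (x : R),
    det_eq_det_sub_castSucc (by simp), hfact, ← det_mul_row]
  congr 1
  ext i j
  simpa [Finset.sum_apply] using sum_Ico_eval_descPochhammer (R := R) j (hβ i.castSucc_lt_succ.le)

/-- Falling factorials are eigenvectors of `f ↦ x * (f x - f (x - 1))`, so the sum over rows is a
trace. -/
theorem sum_mul_det_vandermonde_sub_single (v : Fin m → R) :
    ∑ a, v a * (vandermonde (v - Pi.single a 1)).det =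
      (∑ a, v a - ∑ a : Fin m, (a : R)) * (vandermonde v).det := by
  let M : Matrix (Fin m) (Fin m) R := of fun i j ↦ (descPochhammer R j).eval (v i)
  let N : Matrix (Fin m) (Fin m) R := diagonal fun j ↦ (j : R)
  have hrow (a : Fin m) : v a * (vandermonde (v - Pi.single a 1)).det =
      v a * M.det - (M.updateRow a ((M * N) a)).det := by
    have hupdate :
        (of fun i j : Fin m ↦ (descPochhammer R j).eval ((v - Pi.single a 1 : Fin m → R) i)) =
          M.updateRow a fun j ↦ (descPochhammer R j).eval (v a - 1) := by
      ext i j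
      by_cases h : i = a
      · subst h; simp
      · simp [h, M, updateRow_ne]
    have hsmul : (v a • fun j : Fin m ↦ (descPochhammer R j).eval (v a - 1)) =
        v a • M a + (-1 : R) • (M * N) a := by
      ext j
      simp [M, N, mul_eval_descPochhammer_sub_one]
      ring
    rw [det_vandermonde_eq_det_descPochhammer, hupdate, ← det_updateRow_smul, hsmul,
      det_updateRow_add, det_updateRow_smul, det_updateRow_smul, updateRow_eq_self]
    ring
  rw [sum_congr rfl fun a _ ↦ hrow a, sum_sub_distrib, sum_det_updateRow_mul, ← sum_mul,
    trace_diagonal, det_vandermonde_eq_det_descPochhammer]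
  ring

lemma det_vandermonde_sub_rev (c : R) (v : Fin m → R) :
    (vandermonde fun a ↦ c - v a.rev).det = (vandermonde v).det := by
  simp only [det_vandermonde, sub_sub_sub_cancel_left]
  rw [prod_sigma', prod_sigma']
  refine prod_bij' (fun x _ ↦ ⟨x.2.rev, x.1.rev⟩) (fun x _ ↦ ⟨x.2.rev, x.1.rev⟩) ?_ ?_ ?_ ?_ ?_
  all_goals simp

end Determinants

section Formulas

open scoped Nat

variable {μ ν : YoungDiagram} {m k : ℕ}

/-- The difference product of the beta-numbers of `μ`, as a Vandermonde determinant. -/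
noncomputable def betaDet (μ : YoungDiagram) (m : ℕ) : ℚ :=
  (Matrix.vandermonde fun a ↦ (betaNumber μ m a : ℚ)).det

lemma rowLen_eq_zero_mono (hle : ν ≤ μ) (hμ : μ.rowLen m = 0) : ν.rowLen m = 0 :=
  Nat.eq_zero_of_le_zero (hμ ▸ le_iff_forall_rowLen_le.1 hle m)

lemma eq_bot_of_rowLen_zero (hμ : μ.rowLen 0 = 0) : μ = ⊥ :=
  le_bot_iff.1 <| le_iff_forall_rowLen_le.2 fun i ↦
    (rowLen_eq_zero_of_le hμ i.zero_le).trans_le (Nat.zero_le _)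

lemma factorial_mul_sum_strips_betaDet (hμ : μ.rowLen (k + 1) = 0) :
    k ! * ∑ ν ∈ strips Prod.snd μ with ν.rowLen k = 0, betaDet ν k = betaDet μ (k + 1) := by
  refine Eq.trans (congrArg _ ?_)
    (factorial_mul_sum_det_vandermonde (strictMono_betaNumber μ (k + 1)).monotone)
  refine sum_nbij (betaNumber · k) (fun ν hν ↦ ?_) (fun ν hν ν' hν' h ↦ ?_) (fun γ hγ ↦ ?_)
    fun ν _ ↦ rfl
  · rw [mem_filter] at hν
    exact Fintype.mem_piFinset.2 ((mem_strips_snd_iff_betaNumber hμ hν.2).1 hν.1)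
  · exact injOn_betaNumber k (mem_filter.1 hν).2 (mem_filter.1 hν').2 h
  · rw [mem_coe, Fintype.mem_piFinset] at hγ
    have hγmono : StrictMono γ := fun a b hab ↦ by
      have hβ := (strictMono_betaNumber μ (k + 1)).monotone (Fin.succ_le_castSucc_iff.2 hab)
      exact (mem_Ico.1 (hγ a)).2.trans_le (hβ.trans (mem_Ico.1 (hγ b)).1)
    obtain ⟨ν, hν, rfl⟩ := exists_betaNumber_eq hγmono
    exact ⟨ν, mem_filter.2 ⟨(mem_strips_snd_iff_betaNumber hμ hν).2 hγ, hν⟩, rfl⟩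

theorem ssytCount_eq_betaDet_div (hμ : μ.rowLen m = 0) :
    (ssytCount μ m : ℚ) = betaDet μ m / ∏ i ∈ range m, (i ! : ℚ) := by
  induction m generalizing μ with
  | zero =>
    rw [eq_bot_of_rowLen_zero hμ, ssytCount_bot]
    simp [betaDet]
  | succ k ih =>
    rw [ssytCount_succ, Nat.cast_sum, sum_congr rfl fun ν hν ↦ ih (mem_filter.1 hν).2, ← sum_div,
      ← factorial_mul_sum_strips_betaDet hμ, prod_range_succ]
    field_simp

lemma prod_factorial_eq_mul {ι : Type*} [Fintype ι] [DecidableEq ι] {f g : ι → ℕ} {a : ι}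
    (h : g = f + Pi.single a 1) : ∏ b, (g b)! = g a * ∏ b, (f b)! := by
  have hfactor (b : ι) : (g b)! = (if b = a then g b else 1) * (f b)! := by
    by_cases hb : b = a
    · subst hb; simp [h, Nat.factorial_succ]
    · simp [h, hb]
  rw [prod_congr rfl fun b _ ↦ hfactor b, prod_mul_distrib, Fintype.prod_ite_eq']

lemma natCast_eq_sub_single {ι : Type*} [DecidableEq ι] {f g : ι → ℕ} {a : ι}
    (h : g = f + Pi.single a 1) :
    (fun b ↦ (f b : ℚ)) = (fun b ↦ (g b : ℚ)) - Pi.single a 1 := by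
  ext b
  simp [h, Pi.single_apply]

lemma exists_mem_lowerCovers {a : Fin m} (hμ : μ.rowLen m = 0) (ha : betaNumber μ m a ≠ 0)
    (hinj : Function.Injective ((fun b ↦ (betaNumber μ m b : ℚ)) - Pi.single a 1)) :
    ∃ ν ∈ lowerCovers μ, betaNumber μ m = betaNumber ν m + Pi.single a 1 := by
  let γ : Fin m → ℕ := betaNumber μ m - Pi.single a 1
  have hγ : betaNumber μ m = γ + Pi.single a 1 := by
    refine (tsub_add_cancel_of_le fun b ↦ ?_).symm
    by_cases hb : b = a
    · subst hb; simpa [Nat.one_le_iff_ne_zero] using ha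
    · simp [hb]
  have hγmono : Monotone γ := monotone_iff_forall_lt.2 fun b c hbc ↦ by
    have := strictMono_betaNumber μ m hbc
    simp only [γ, Pi.sub_apply, Pi.single_apply]
    split_ifs <;> omega
  rw [← natCast_eq_sub_single hγ] at hinj
  have hγinj : Function.Injective γ := hinj.of_comp (f := Nat.cast)
  obtain ⟨ν, hν, hνγ⟩ := exists_betaNumber_eq (hγmono.strictMono_of_injective hγinj)
  rw [← hνγ] at hγ
  exact ⟨ν, (mem_lowerCovers_iff_betaNumber hμ hν).2 ⟨a, hγ⟩, hγ⟩

lemma sum_lowerCovers_betaDet_div (hμ : μ.rowLen m = 0) :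
    ∑ ν ∈ lowerCovers μ, betaDet ν m / ∏ a, ((betaNumber ν m a)! : ℚ) =
      μ.card * betaDet μ m / ∏ a, ((betaNumber μ m a)! : ℚ) := by
  have hrow {ν : YoungDiagram} (hν : ν ∈ lowerCovers μ) : ν.rowLen m = 0 :=
    rowLen_eq_zero_mono (mem_lowerCovers.1 hν).1 hμ
  have hcard : ∑ a, (betaNumber μ m a : ℚ) - ∑ a : Fin m, (a : ℚ) = μ.card := by
    rw [sub_eq_iff_eq_add]
    exact_mod_cast sum_betaNumber hμ
  choose e he using fun ν : lowerCovers μ ↦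
    (mem_lowerCovers_iff_betaNumber hμ (hrow ν.2)).1 ν.2
  rw [eq_div_iff (prod_ne_zero_iff.2 fun a _ ↦ Nat.cast_ne_zero.2 (Nat.factorial_ne_zero _)),
    sum_mul, ← hcard, betaDet, ← sum_mul_det_vandermonde_sub_single, ← sum_coe_sort]
  refine sum_of_injOn e (fun ν _ ν' _ h ↦ ?_) (fun _ _ ↦ mem_univ _) (fun a _ ha ↦ ?_)
    fun ν _ ↦ ?_
  · refine Subtype.ext (injOn_betaNumber m (hrow ν.2) (hrow ν'.2) ?_)
    exact add_right_cancel ((he ν).symm.trans ((he ν').trans (by rw [h])))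
  · by_contra hne
    obtain ⟨hβa, hdet⟩ := mul_ne_zero_iff.1 hne
    obtain ⟨ν, hν, hνa⟩ := exists_mem_lowerCovers hμ (Nat.cast_ne_zero.1 hβa)
      (Matrix.det_vandermonde_ne_zero_iff.1 hdet)
    have hsingle := add_left_cancel ((he ⟨ν, hν⟩).symm.trans hνa)
    refine ha ⟨⟨ν, hν⟩, mem_univ _, not_not.1 fun hea ↦ ?_⟩
    simpa [Pi.single_apply, hea] using congrFun hsingle (e ⟨ν, hν⟩)
  · have hfact : ∏ a, ((betaNumber μ m a)! : ℚ) =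
        betaNumber μ m (e ν) * ∏ a, ((betaNumber ν m a)! : ℚ) := by
      exact_mod_cast prod_factorial_eq_mul (he ν)
    rw [hfact, betaDet, natCast_eq_sub_single (he ν)]
    field_simp

theorem sytCount_eq_betaDet_div (hμ : μ.rowLen m = 0) :
    (sytCount μ : ℚ) = μ.card ! * betaDet μ m / ∏ a, ((betaNumber μ m a)! : ℚ) := by
  induction hp : μ.card generalizing μ with
  | zero =>
    obtain rfl : μ = ⊥ := YoungDiagram.ext (card_eq_zero.1 hp)
    have hdet := ssytCount_eq_betaDet_div (rowLen_bot m)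
    rw [ssytCount_bot] at hdet
    rw [sytCount_bot]
    simp only [betaNumber_bot]
    rw [Finset.prod_range] at hdet
    simpa using hdet
  | succ p ih =>
    have hterm (ν : YoungDiagram) (hν : ν ∈ lowerCovers μ) :
        (sytCount ν : ℚ) = p ! * (betaDet ν m / ∏ a, ((betaNumber ν m a)! : ℚ)) := by
      obtain ⟨hle, hcard⟩ := mem_lowerCovers.1 hν
      rw [ih (rowLen_eq_zero_mono hle hμ) (Nat.succ_injective (hcard.trans hp)), mul_div_assoc]
    rw [sytCount_eq_sum_lowerCovers (by simp [hp]), Nat.cast_sum, sum_congr rfl hterm, ← mul_sum,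
      sum_lowerCovers_betaDet_div hμ, hp, Nat.factorial_succ]
    push_cast
    ring

end Formulas

section Complement

variable {μ : YoungDiagram} {m n : ℕ}

lemma rowLen_le_of_le_rect (hμ : μ ≤ rect m n) (i : ℕ) : μ.rowLen i ≤ n :=
  le_of_forall_lt fun _ hj ↦
    mem_range.1 (mem_product.1 ((mem_cells _).2 (hμ (mem_iff_lt_rowLen.2 hj)))).2

lemma rowLen_eq_zero_of_le_rect (hμ : μ ≤ rect m n) : μ.rowLen m = 0 := by
  by_contra h
  have hmem := (mem_cells _).2 (hμ (mem_iff_lt_rowLen.2 (Nat.pos_of_ne_zero h)))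
  exact (mem_range.1 (mem_product.1 hmem).1).false

lemma transpose_le_rect (hμ : μ ≤ rect m n) : μ.transpose ≤ rect n m := fun c hc ↦ by
  have hmem := (mem_cells _).2 (hμ (mem_transpose.1 hc))
  exact mem_product.2 (mem_product.1 hmem).symm

lemma mem_complement {c : ℕ × ℕ} :
    c ∈ complement m n μ ↔ c.1 < m ∧ c.2 < n - μ.rowLen (m - 1 - c.1) := by
  rw [← mem_cells, complement, mem_filter, mem_product, mem_range, mem_range]
  exact ⟨fun h ↦ ⟨h.1.1, h.2⟩, fun h ↦ ⟨⟨h.1, h.2.trans_le (Nat.sub_le _ _)⟩, h.2⟩⟩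

lemma rowLen_complement {i : ℕ} (hi : i < m) :
    (complement m n μ).rowLen i = n - μ.rowLen (m - 1 - i) :=
  eq_of_forall_lt_iff fun j ↦ by rw [← mem_iff_lt_rowLen, mem_complement, and_iff_right hi]

lemma complement_le_rect : complement m n μ ≤ rect m n := fun _ hc ↦ (mem_filter.1 hc).1

lemma complement_bot (m n : ℕ) : complement m n ⊥ = rect m n :=
  YoungDiagram.ext <| filter_true_of_mem fun c hc ↦ by
    simpa [rowLen_bot] using (mem_product.1 hc).2

lemma card_complement_add_card (hμ : μ ≤ rect m n) : (complement m n μ).card + μ.card = m * n := by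
  rw [card_eq_sum_rowLen (rowLen_eq_zero_of_le_rect complement_le_rect),
    card_eq_sum_rowLen (rowLen_eq_zero_of_le_rect hμ),
    sum_congr rfl fun i hi ↦ rowLen_complement (mem_range.1 hi),
    sum_range_reflect (fun i ↦ n - μ.rowLen i), ← sum_add_distrib,
    sum_congr rfl fun i _ ↦ Nat.sub_add_cancel (rowLen_le_of_le_rect hμ i), sum_const, card_range,
    smul_eq_mul]

lemma betaNumber_complement (a : Fin m) :
    betaNumber (complement m n μ) m a = n - μ.rowLen a + a := by
  rw [betaNumber, rowLen_complement a.rev.isLt]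
  congr 3
  rw [Fin.val_rev]
  omega

lemma betaDet_complement (hμ : μ ≤ rect m n) : betaDet (complement m n μ) m = betaDet μ m := by
  rw [betaDet, betaDet,
    ← det_vandermonde_sub_rev (m + n - 1 : ℚ) fun a ↦ (betaNumber μ m a : ℚ)]
  congr 2
  ext a
  have h : n - μ.rowLen a + a + (μ.rowLen a + a.rev) + 1 = m + n := by
    have := rowLen_le_of_le_rect hμ a
    rw [Fin.val_rev]
    omega
  rw [betaNumber_complement, betaNumber, Fin.rev_rev, ← Nat.cast_add m n, ← h]
  push_cast
  ring

theorem ssytCount_complement (hμ : μ ≤ rect m n) :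
    ssytCount (complement m n μ) m = ssytCount μ m := by
  rw [← Nat.cast_inj (R := ℚ),
    ssytCount_eq_betaDet_div (rowLen_eq_zero_of_le_rect complement_le_rect),
    ssytCount_eq_betaDet_div (rowLen_eq_zero_of_le_rect hμ), betaDet_complement hμ]

lemma prod_comp_eq_prod_range {ι M : Type*} [Fintype ι] [CommMonoid M] {f : ι → ℕ}
    (hf : Function.Injective f) (hlt : ∀ i, f i < Fintype.card ι) (g : ℕ → M) :
    ∏ i, g (f i) = ∏ j ∈ range (Fintype.card ι), g j := by
  have himage : univ.map ⟨f, hf⟩ = range (Fintype.card ι) := by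
    refine eq_of_subset_of_card_le (fun j hj ↦ ?_) (by simp)
    obtain ⟨i, -, rfl⟩ := mem_map.1 hj
    exact mem_range.2 (hlt i)
  rw [← himage, prod_map]
  rfl

/-- The beta-numbers of the complement and of the transpose of `μ` partition `{0, …, m + n - 1}`
(Macdonald, *Symmetric functions and Hall polynomials*, I (1.7)). -/
theorem prod_betaNumber_complement_mul_prod_betaNumber_transpose {M : Type*} [CommMonoid M]
    (hμ : μ ≤ rect m n) (g : ℕ → M) :
    (∏ a, g (betaNumber (complement m n μ) m a)) * ∏ b, g (betaNumber μ.transpose n b) =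
      ∏ i ∈ range (m + n), g i := by
  let f : Fin m ⊕ Fin n → ℕ :=
    Sum.elim (betaNumber (complement m n μ) m) (betaNumber μ.transpose n)
  have hne (a : Fin m) (b : Fin n) :
      betaNumber (complement m n μ) m a ≠ betaNumber μ.transpose n b := by
    have hrow := rowLen_le_of_le_rect hμ a
    have hcell : (b.rev : ℕ) < μ.rowLen a ↔ (a : ℕ) < μ.colLen b.rev := by
      rw [← mem_iff_lt_rowLen, mem_iff_lt_colLen]
    rw [betaNumber_complement, betaNumber, rowLen_transpose]
    rw [Fin.val_rev] at hcell ⊢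
    omega
  have hf : Function.Injective f :=
    (strictMono_betaNumber _ m).injective.sumElim (strictMono_betaNumber _ n).injective hne
  have hlt : ∀ i, f i < Fintype.card (Fin m ⊕ Fin n) := by
    simp only [Fintype.card_sum, Fintype.card_fin]
    rintro (a | b)
    · exact (betaNumber_complement a).trans_lt (by omega)
    · have := rowLen_le_of_le_rect (transpose_le_rect hμ) b.rev
      exact lt_of_lt_of_le (add_lt_add_of_le_of_lt this b.isLt) le_rfl
  have hprod := prod_comp_eq_prod_range hf hlt g
  rwa [Fintype.prod_sum_type, Fintype.card_sum, Fintype.card_fin, Fintype.card_fin] at hprod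

end Complement

section Ratio

open scoped Nat

variable {μ : YoungDiagram} {m n : ℕ}

theorem ssytCount_eq_sytCount_mul_div (hμ : μ.rowLen m = 0) :
    (ssytCount μ m : ℚ) =
      sytCount μ * (∏ a, ((betaNumber μ m a)! : ℚ)) / (μ.card ! * ∏ i ∈ range m, (i ! : ℚ)) := by
  have hprod : ∏ a, ((betaNumber μ m a)! : ℚ) ≠ 0 :=
    prod_ne_zero_iff.2 fun a _ ↦ Nat.cast_ne_zero.2 (Nat.factorial_ne_zero _)
  rw [ssytCount_eq_betaDet_div hμ, sytCount_eq_betaDet_div hμ]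
  field_simp

theorem ssytCount_mul_ssytCount_transpose (hμ : μ ≤ rect m n) :
    (ssytCount μ m * ssytCount μ.transpose n : ℚ) =
      (m * n).choose μ.card * (sytCount μ * sytCount (complement m n μ)) *
        ((∏ i ∈ range (m + n), (i ! : ℚ)) /
          ((m * n)! * (∏ i ∈ range m, (i ! : ℚ)) * ∏ i ∈ range n, (i ! : ℚ))) := by
  have hchoose : ((m * n).choose μ.card : ℚ) =
      (m * n)! / ((complement m n μ).card ! * μ.card !) := by
    rw [← card_complement_add_card hμ, add_comm, Nat.cast_add_choose, mul_comm (μ.card ! : ℚ)]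
  rw [← ssytCount_complement hμ,
    ssytCount_eq_sytCount_mul_div (rowLen_eq_zero_of_le_rect complement_le_rect),
    ssytCount_eq_sytCount_mul_div (rowLen_eq_zero_of_le_rect (transpose_le_rect hμ)),
    sytCount_transpose, card_transpose, hchoose,
    ← prod_betaNumber_complement_mul_prod_betaNumber_transpose hμ fun i ↦ (i ! : ℚ)]
  field_simp

lemma sytCount_rect_mul (m n : ℕ) :
    (sytCount (rect m n) : ℚ) * ((∏ i ∈ range (m + n), (i ! : ℚ)) /
      ((m * n)! * (∏ i ∈ range m, (i ! : ℚ)) * ∏ i ∈ range n, (i ! : ℚ))) = 1 := by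
  have htranspose : (⊥ : YoungDiagram).transpose = ⊥ := rfl
  have hcard : (⊥ : YoungDiagram).card = 0 := rfl
  have h := ssytCount_mul_ssytCount_transpose (bot_le : ⊥ ≤ rect m n)
  rw [htranspose, hcard, complement_bot, ssytCount_bot, ssytCount_bot, sytCount_bot,
    Nat.choose_zero_right] at h
  simpa only [Nat.cast_one, one_mul] using h.symm

end Ratio

/-- for `λ ⊆ n^m` with `p` boxes,
`dim S^λ(ℂ^m)·dim S^{λ'}(ℂ^n) / C(mn,p) = f^λ · f^{n^m/λ} / f^{n^m}`. -/
theorem external_power_component_probability (m n p : ℕ) (μ : YoungDiagram)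
    (hμ : μ ≤ rect m n) (hp : μ.card = p) :
    (ssytCount μ m * ssytCount μ.transpose n : ℚ) / (m * n).choose p
      = (sytCount μ * sytCount (complement m n μ) : ℚ) / sytCount (rect m n) := by
  subst hp
  have hchoose : ((m * n).choose μ.card : ℚ) ≠ 0 := Nat.cast_ne_zero.2
    (Nat.choose_pos (card_complement_add_card hμ ▸ Nat.le_add_left _ _)).ne'
  have hrect := sytCount_rect_mul m n
  rw [ssytCount_mul_ssytCount_transpose hμ, mul_assoc, mul_div_cancel_left₀ _ hchoose,
    eq_div_iff (left_ne_zero_of_mul_eq_one hrect), mul_assoc, mul_comm _ (sytCount (rect m n) : ℚ),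
    hrect, mul_one]
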